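/- arXiv:2311.00820 — 4 statements merged into one kernel-verified Lean document; each statement's English description precedes it below -/
import Mathlib

section
/- Let V : ℝ → ℝ be continuous with V(t) > 0 for all t, and let m : ℝ → ℝ be differentiable and satisfy the canonical-link identity m′(s) = V(m(s)) for all s ∈ ℝ. Let x₁, …, x_n ∈ ℝᵖ, a ∈ ℝ, ψ > 0, β₀ ∈ ℝᵖ, and suppose the matrix with rows x₁ᵀ, …, x_nᵀ has rank p. Define L(β) = Σ_{i=1}^n ∫_a^{m(x_iᵀβ)} ( m(x_iᵀβ₀) − t )/(ψ·V(t)) dt. Then L is strictly concave on ℝᵖ and β₀ is its unique global maximizer. -/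
open scoped RealInnerProductSpace

theorem aux_hasDeriv (V : ℝ → ℝ) (hVcont : Continuous V) (hVpos : ∀ t, 0 < V t)
    (m : ℝ → ℝ) (hm : Differentiable ℝ m) (hcanon : ∀ s, deriv m s = V (m s))
    (a ψ : ℝ) (hψ : 0 < ψ) (c s : ℝ) :
    HasDerivAt (fun s => ∫ t in a..(m s), (m c - t) / (ψ * V t)) ((m c - m s) / ψ) s := by
  have hc : Continuous fun t => (m c - t) / (ψ * V t) :=
    (continuous_const.sub continuous_id).div (continuous_const.mul hVcont)
      (fun t => (mul_pos hψ (hVpos t)).ne')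
  have h1 : HasDerivAt (fun u => ∫ t in a..u, (m c - t) / (ψ * V t))
      ((m c - m s) / (ψ * V (m s))) (m s) := hc.integral_hasStrictDerivAt a (m s) |>.hasDerivAt
  have h2 := (hm s).hasDerivAt
  rw [hcanon] at h2
  have h3 := h1.comp s h2
  have hv := (hVpos (m s)).ne'
  have e : (m c - m s) / (ψ * V (m s)) * V (m s) = (m c - m s) / ψ := by
    field_simp
  rw [e] at h3
  exact h3

theorem aux_sep {n p : ℕ} (x : Fin n → EuclideanSpace ℝ (Fin p))
    (hrank : (Matrix.of fun (i : Fin n) (j : Fin p) => x i j).rank = p)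
    (β γ : EuclideanSpace ℝ (Fin p)) (h : β ≠ γ) : ∃ i, ⟪x i, β⟫ ≠ ⟪x i, γ⟫ := by
  by_contra! hc
  apply h
  have hinj : Function.Injective (Matrix.of fun (i : Fin n) (j : Fin p) => x i j).mulVec := by
    rw [Matrix.mulVec_injective_iff, linearIndependent_iff_card_eq_finrank_span]
    rw [Matrix.rank_eq_finrank_span_cols] at hrank
    simpa [Set.finrank] using hrank.symm
  have : β.ofLp = γ.ofLp := by
    apply hinj
    ext i
    have := hc i
    simp only [PiLp.inner_apply, RCLike.inner_apply, conj_trivial] at this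
    simpa [Matrix.mulVec, dotProduct, mul_comm] using this
  exact WithLp.ofLp_injective 2 this

/-- Uniqueness case of Theorem 1 of the paper (canonical link, `m′ = V ∘ m`): under
full column rank of the design matrix, the integrated quasi-log-likelihood
`L(β) = Σᵢ ∫_a^{m(xᵢᵀβ)} (m(xᵢᵀβ₀) − t)/(ψ V(t)) dt` is strictly concave on `ℝᵖ`
and `β₀` is its unique global maximizer. -/
theorem integrated_quasi_likelihood_unique_max {n p : ℕ}
    (V : ℝ → ℝ) (hVcont : Continuous V) (hVpos : ∀ t, 0 < V t)
    (m : ℝ → ℝ) (hm : Differentiable ℝ m)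
    (hcanon : ∀ s, deriv m s = V (m s))
    (x : Fin n → EuclideanSpace ℝ (Fin p)) (a : ℝ) (ψ : ℝ) (hψ : 0 < ψ)
    (β₀ : EuclideanSpace ℝ (Fin p))
    (hrank : (Matrix.of fun (i : Fin n) (j : Fin p) => x i j).rank = p) :
    StrictConcaveOn ℝ Set.univ
      (fun β : EuclideanSpace ℝ (Fin p) =>
        ∑ i, ∫ t in a..(m ⟪x i, β⟫), (m ⟪x i, β₀⟫ - t) / (ψ * V t)) ∧
    ∀ β : EuclideanSpace ℝ (Fin p), β ≠ β₀ →
      (∑ i, ∫ t in a..(m ⟪x i, β⟫), (m ⟪x i, β₀⟫ - t) / (ψ * V t))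
        < ∑ i, ∫ t in a..(m ⟪x i, β₀⟫), (m ⟪x i, β₀⟫ - t) / (ψ * V t) := by
  have hmono : StrictMono m := strictMono_of_deriv_pos fun s => by rw [hcanon]; exact hVpos _
  have hd := aux_hasDeriv V hVcont hVpos m hm hcanon a ψ hψ
  have hconc : ∀ c, StrictConcaveOn ℝ Set.univ
      (fun s => ∫ t in a..(m s), (m c - t) / (ψ * V t)) := by
    intro c
    apply StrictAnti.strictConcaveOn_univ_of_deriv
    · exact continuous_iff_continuousAt.2 fun s => (hd c s).continuousAt
    · intro s t hst
      rw [(hd c s).deriv, (hd c t).deriv]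
      have := hmono hst
      gcongr
  have hmax : ∀ c s, s ≠ c → (∫ t in a..(m s), (m c - t) / (ψ * V t))
      < ∫ t in a..(m c), (m c - t) / (ψ * V t) := by
    intro c s hs
    have hcont : Continuous (fun s => ∫ t in a..(m s), (m c - t) / (ψ * V t)) :=
      continuous_iff_continuousAt.2 fun s => (hd c s).continuousAt
    rcases lt_or_gt_of_ne hs with h | h
    · refine strictMonoOn_of_deriv_pos (convex_Iic c) hcont.continuousOn ?_ h.le Set.self_mem_Iic h
      intro t ht
      rw [interior_Iic] at ht
      rw [(hd c t).deriv]
      exact div_pos (sub_pos.2 (hmono ht)) hψ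
    · refine strictAntiOn_of_deriv_neg (convex_Ici c) hcont.continuousOn ?_ Set.self_mem_Ici h.le h
      intro t ht
      rw [interior_Ici] at ht
      rw [(hd c t).deriv]
      exact div_neg_of_neg_of_pos (sub_neg.2 (hmono ht)) hψ
  refine ⟨⟨convex_univ, ?_⟩, ?_⟩
  · intro β _ γ _ hne u v hu hv huv
    obtain ⟨i, hi⟩ := aux_sep x hrank β γ hne
    simp only [Finset.smul_sum, inner_add_right, inner_smul_right]
    rw [← Finset.sum_add_distrib]
    apply Finset.sum_lt_sum
    · intro j _
      exact (hconc ⟪x j, β₀⟫).concaveOn.2 (Set.mem_univ _) (Set.mem_univ _) hu.le hv.le huv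
    · exact ⟨i, Finset.mem_univ _,
        (hconc ⟪x i, β₀⟫).2 (Set.mem_univ _) (Set.mem_univ _) hi hu hv huv⟩
  · intro β hne
    obtain ⟨i, hi⟩ := aux_sep x hrank β β₀ hne
    apply Finset.sum_lt_sum
    · intro j _
      by_cases hj : ⟪x j, β⟫ = ⟪x j, β₀⟫
      · rw [hj]
      · exact (hmax _ _ hj).le
    · exact ⟨i, Finset.mem_univ _, hmax _ _ hi⟩
end

section
/- Let M ⊆ ℝ be an open interval, V : M → ℝ continuous with V(μ) > 0 for all μ ∈ M, θ : M → ℝ differentiable with θ′(μ) = 1/V(μ) for all μ ∈ M, and b : ℝ → ℝ differentiable on θ(M) with b′(θ(μ)) = μ for all μ ∈ M. Then for every y ∈ ℝ and every a, μ ∈ M: ∫_a^μ (y − t)/V(t) dt = ( y·θ(μ) − b(θ(μ)) ) − ( y·θ(a) − b(θ(a)) ). -/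
/-- The 'if' direction of Wedderburn's theorem (Theorem 2 of the paper): on an open
interval `M`, with `V` continuous and positive, `θ` the natural parametrization
(`θ′ = 1/V`) and `b` the cumulant function (`b′(θ(μ)) = μ`), the log-quasi-likelihood
coincides with the genuine exponential-family log-likelihood up to a constant:
`∫_a^μ (y − t)/V(t) dt = (y θ(μ) − b(θ(μ))) − (y θ(a) − b(θ(a)))`. -/
theorem wedderburn_if (M : Set ℝ) (hMopen : IsOpen M) (hMconn : M.OrdConnected)
    (V : ℝ → ℝ) (hVcont : ContinuousOn V M) (hVpos : ∀ μ ∈ M, 0 < V μ)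
    (θ : ℝ → ℝ) (hθ : ∀ μ ∈ M, HasDerivAt θ (1 / V μ) μ)
    (b : ℝ → ℝ) (hb : ∀ μ ∈ M, HasDerivAt b μ (θ μ)) :
    ∀ (y : ℝ), ∀ a ∈ M, ∀ μ ∈ M,
      ∫ t in a..μ, (y - t) / V t
        = (y * θ μ - b (θ μ)) - (y * θ a - b (θ a)) := by
  intro y a ha μ hμ
  have hsub : Set.uIcc a μ ⊆ M := hMconn.uIcc_subset ha hμ
  refine intervalIntegral.integral_eq_sub_of_hasDerivAt
    (f := fun t => y * θ t - b (θ t)) ?_ ?_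
  · intro t ht
    have h1 := hθ t (hsub ht)
    have h2 := (h1.const_mul y).sub ((hb t (hsub ht)).comp t h1)
    refine h2.congr_deriv ?_
    ring
  · apply ContinuousOn.intervalIntegrable
    exact (continuousOn_const.sub continuousOn_id).div (hVcont.mono hsub)
      (fun t ht => (hVpos t (hsub ht)).ne')
end

section
/- Let M ⊆ ℝ be an open interval, V : M → ℝ continuous with V(μ) > 0 for all μ ∈ M, and let f : ℝ × M → ℝ be strictly positive such that, for each y ∈ ℝ, the map μ ↦ log f(y, μ) is differentiable on M with derivative (y − μ)/V(μ). Fix a ∈ M and define θ(μ) = ∫_a^μ 1/V(t) dt and B(μ) = ∫_a^μ t/V(t) dt. Then for all y ∈ ℝ and all μ ∈ M: f(y, μ) = f(y, a) · exp( y·θ(μ) − B(μ) ). -/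
/-- The 'only if' direction of Wedderburn's theorem (Theorem 2 of the paper): if a
strictly positive density `f(y, μ)` on an open interval `M` has score function
`∂/∂μ log f(y, μ) = (y − μ)/V(μ)`, then, with `θ(μ) = ∫_a^μ 1/V(t) dt` and
`B(μ) = ∫_a^μ t/V(t) dt`, it has the exponential form
`f(y, μ) = f(y, a)·exp(y·θ(μ) − B(μ))`. -/
theorem wedderburn_only_if (M : Set ℝ) (hMopen : IsOpen M) (hMconn : M.OrdConnected)
    (V : ℝ → ℝ) (hVcont : ContinuousOn V M) (hVpos : ∀ μ ∈ M, 0 < V μ)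
    (f : ℝ → ℝ → ℝ) (hfpos : ∀ (y : ℝ), ∀ μ ∈ M, 0 < f y μ)
    (hscore : ∀ (y : ℝ), ∀ μ ∈ M,
      HasDerivAt (fun μ : ℝ => Real.log (f y μ)) ((y - μ) / V μ) μ)
    (a : ℝ) (ha : a ∈ M) :
    ∀ (y : ℝ), ∀ μ ∈ M,
      f y μ = f y a *
        Real.exp (y * (∫ t in a..μ, 1 / V t) - ∫ t in a..μ, t / V t) := by
  intro y μ hμ
  have hsub : Set.uIcc a μ ⊆ M := hMconn.uIcc_subset ha hμ
  have hV : ContinuousOn V (Set.uIcc a μ) := hVcont.mono hsub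
  have hne : ∀ t ∈ Set.uIcc a μ, V t ≠ 0 := fun t ht => (hVpos t (hsub ht)).ne'
  have h1 : IntervalIntegrable (fun t => 1 / V t) MeasureTheory.volume a μ :=
    (continuousOn_const.div hV hne).intervalIntegrable
  have h2 : IntervalIntegrable (fun t => t / V t) MeasureTheory.volume a μ :=
    (continuousOn_id.div hV hne).intervalIntegrable
  have h3 : IntervalIntegrable (fun t => (y - t) / V t) MeasureTheory.volume a μ :=
    ((continuousOn_const.sub continuousOn_id).div hV hne).intervalIntegrable
  have key := intervalIntegral.integral_eq_sub_of_hasDerivAt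
    (fun t ht => hscore y t (hsub ht)) h3
  have hsplit : (∫ t in a..μ, (y - t) / V t)
      = y * (∫ t in a..μ, 1 / V t) - ∫ t in a..μ, t / V t := by
    rw [← intervalIntegral.integral_const_mul,
      ← intervalIntegral.integral_sub (h1.const_mul y) h2]
    congr 1
    funext t
    ring
  rw [← hsplit, key, Real.exp_sub, Real.exp_log (hfpos y μ hμ), Real.exp_log (hfpos y a ha)]
  have := (hfpos y a ha).ne'
  field_simp
end

section
/- Let M ⊆ ℝ be an open interval, V : M → ℝ continuous with V(μ) > 0 for all μ ∈ M, θ : M → ℝ differentiable with θ′(μ) = 1/V(μ), and b : ℝ → ℝ differentiable on θ(M) with b′(θ(μ)) = μ for all μ ∈ M. Let m : ℝ → ℝ with m(s) ∈ M for all s, let x₁, …, x_n ∈ ℝᵖ, y₁, …, y_n ∈ ℝ, h : ℝ → (0, ∞), a ∈ M, a prior density p : ℝᵖ → [0, ∞), and α > 0, and set ψ = (α + n)/α. Define μ_i(β) = m(x_iᵀβ) and f(y_i | β, x_i) = h(y_i)·exp{ θ(μ_i(β))·y_i − b(θ(μ_i(β))) }. Then there exists a constant c > 0, not depending on β, such that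 for all β ∈ ℝᵖ: p(β) · exp{ (1/ψ) · Σ_{i=1}^n ∫_a^{μ_i(β)} (y_i − t)/V(t) dt } = c · p(β) · ∏_{i=1}^n f(y_i | β, x_i)^{α/(α+n)}. -/
open scoped RealInnerProductSpace

/-- Proposition 1 of the paper: when the variance function `V` is the variance
function of a one-parameter exponential family with natural parametrization `θ`
(`θ′ = 1/V`, `b′(θ(μ)) = μ`), the unnormalized quasi-posterior density with
dispersion `ψ = (α + n)/α` is proportional (as a function of `β`) to the power
posterior approximation of the coarsened posterior with coarsening parameter `α`:
`p(β)·exp{(1/ψ) Σᵢ ∫_a^{μᵢ(β)} (yᵢ − t)/V(t) dt} = c·p(β)·∏ᵢ f(yᵢ | β, xᵢ)^{α/(α+n)}`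
for some constant `c > 0` not depending on `β`, where `μᵢ(β) = m(xᵢᵀβ)` and
`f(y | β, x) = h(y)·exp{θ(μ(β))·y − b(θ(μ(β)))}`. -/
theorem quasi_posterior_eq_coarsened_posterior {d n : ℕ}
    (M : Set ℝ) (hMopen : IsOpen M) (hMconn : M.OrdConnected)
    (V : ℝ → ℝ) (hVcont : ContinuousOn V M) (hVpos : ∀ μ ∈ M, 0 < V μ)
    (θ : ℝ → ℝ) (hθ : ∀ μ ∈ M, HasDerivAt θ (1 / V μ) μ)
    (b : ℝ → ℝ) (hb : ∀ μ ∈ M, HasDerivAt b μ (θ μ))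
    (m : ℝ → ℝ) (hmM : ∀ s, m s ∈ M)
    (x : Fin n → EuclideanSpace ℝ (Fin d)) (y : Fin n → ℝ)
    (h : ℝ → ℝ) (hh : ∀ z, 0 < h z)
    (a : ℝ) (ha : a ∈ M)
    (pr : EuclideanSpace ℝ (Fin d) → ℝ) (hpr : ∀ β, 0 ≤ pr β)
    (α : ℝ) (hα : 0 < α) (ψ : ℝ) (hψ : ψ = (α + n) / α) :
    ∃ c : ℝ, 0 < c ∧ ∀ β : EuclideanSpace ℝ (Fin d),
      pr β * Real.exp ((1 / ψ) *
          ∑ i, ∫ t in a..(m ⟪x i, β⟫), (y i - t) / V t)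
        = c * pr β *
          ∏ i, (h (y i) *
              Real.exp (θ (m ⟪x i, β⟫) * y i - b (θ (m ⟪x i, β⟫)))) ^ (α / (α + n)) := by
  have hint : ∀ (z u : ℝ), u ∈ M → ∫ t in a..u, (z - t) / V t
      = (θ u * z - b (θ u)) - (θ a * z - b (θ a)) := by
    intro z u hu
    have hsub : Set.uIcc a u ⊆ M := hMconn.uIcc_subset ha hu
    refine intervalIntegral.integral_eq_sub_of_hasDerivAt
      (f := fun t => θ t * z - b (θ t)) ?_ ?_
    · intro t ht
      have h1 := hθ t (hsub ht)
      have h2 := (h1.mul_const z).sub ((hb t (hsub ht)).comp t h1)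
      refine h2.congr_deriv ?_
      ring
    · apply ContinuousOn.intervalIntegrable
      refine ContinuousOn.div (by fun_prop) (hVcont.mono hsub) ?_
      intro t ht
      exact (hVpos t (hsub ht)).ne'
  have hψ' : 1 / ψ = α / (α + n) := by rw [hψ, one_div_div]
  rw [hψ']
  generalize α / (α + n) = k
  refine ⟨∏ i, ((h (y i) * Real.exp (θ a * y i - b (θ a))) ^ k)⁻¹, ?_, ?_⟩
  · refine Finset.prod_pos fun i _ => ?_
    have := hh (y i)
    positivity
  · intro β
    rw [mul_comm (∏ i, _) (pr β), mul_assoc, ← Finset.prod_mul_distrib, Finset.mul_sum,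
      Real.exp_sum]
    congr 1
    refine Finset.prod_congr rfl fun i _ => ?_
    rw [hint _ _ (hmM _)]
    have hp := hh (y i)
    rw [Real.mul_rpow hp.le (Real.exp_pos _).le, Real.mul_rpow hp.le (Real.exp_pos _).le,
      ← Real.exp_mul, ← Real.exp_mul, mul_inv, ← Real.exp_neg]
    have hk : (h (y i) ^ k) ≠ 0 := (Real.rpow_pos_of_pos hp k).ne'
    rw [mul_mul_mul_comm, inv_mul_cancel₀ hk, one_mul, ← Real.exp_add]
    congr 1
    ring
end
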